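/- The number of crossings is additive with respect to the direct product on 132-avoiding permutations: for all 132-avoiding permutations α and β, crs(α⊗β) = crs(α) + crs(β). -/

import Mathlib

open Equiv Finset

/-- Number of crossings of a permutation of `Fin n` (0-indexed version of the
classical definition on `[n] = {1,…,n}`): pairs `(i,j)` with
`i<j<σ(i)<σ(j)` or `σ(i)<σ(j)≤i<j`. -/
def crs {n : ℕ} (σ : Equiv.Perm (Fin n)) : ℕ :=
  (Finset.univ.filter (fun q : Fin n × Fin n =>
    ((q.1 : ℕ) < q.2 ∧ (q.2 : ℕ) < σ q.1 ∧ (σ q.1 : ℕ) < σ q.2) ∨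
    ((σ q.1 : ℕ) < σ q.2 ∧ (σ q.2 : ℕ) ≤ q.1 ∧ (q.1 : ℕ) < q.2))).card

/-- Number of nestings of a permutation of `Fin n`: pairs `(i,j)` with
`i<j<σ(j)<σ(i)` or `σ(j)<σ(i)≤i<j`. -/
def nes {n : ℕ} (σ : Equiv.Perm (Fin n)) : ℕ :=
  (Finset.univ.filter (fun q : Fin n × Fin n =>
    ((q.1 : ℕ) < q.2 ∧ (q.2 : ℕ) < σ q.2 ∧ (σ q.2 : ℕ) < σ q.1) ∨
    ((σ q.2 : ℕ) < σ q.1 ∧ (σ q.1 : ℕ) ≤ q.1 ∧ (q.1 : ℕ) < q.2))).card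

/-- Number of fixed points. -/
def fp {n : ℕ} (σ : Equiv.Perm (Fin n)) : ℕ :=
  (Finset.univ.filter (fun i : Fin n => σ i = i)).card

/-- Number of excedances. -/
def exc {n : ℕ} (σ : Equiv.Perm (Fin n)) : ℕ :=
  (Finset.univ.filter (fun i : Fin n => (i : ℕ) < σ i)).card

/-- Number of inversions. -/
def invStat {n : ℕ} (σ : Equiv.Perm (Fin n)) : ℕ :=
  (Finset.univ.filter (fun q : Fin n × Fin n => q.1 < q.2 ∧ σ q.2 < σ q.1)).card

/-- `σ` contains the pattern `τ`: there is a strictly increasing choice of positions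
on which `σ` is order-isomorphic to `τ`. -/
def Contains {n k : ℕ} (σ : Equiv.Perm (Fin n)) (τ : Equiv.Perm (Fin k)) : Prop :=
  ∃ f : Fin k → Fin n, StrictMono f ∧ ∀ a b : Fin k, σ (f a) < σ (f b) ↔ τ a < τ b

/-- `σ` avoids the pattern `τ`. -/
def Avoids {n k : ℕ} (σ : Equiv.Perm (Fin n)) (τ : Equiv.Perm (Fin k)) : Prop :=
  ¬ Contains σ τ

/-- The pattern 123 (as a permutation of `Fin 3`, 0-indexed). -/
def p123 : Equiv.Perm (Fin 3) := 1
/-- The pattern 132. -/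
def p132 : Equiv.Perm (Fin 3) := Equiv.swap 1 2
/-- The pattern 213. -/
def p213 : Equiv.Perm (Fin 3) := Equiv.swap 0 1
/-- The pattern 321. -/
def p321 : Equiv.Perm (Fin 3) := Equiv.swap 0 2
/-- The pattern 231. -/
def p231 : Equiv.Perm (Fin 3) := Equiv.swap 0 2 * Equiv.swap 0 1
/-- The pattern 312. -/
def p312 : Equiv.Perm (Fin 3) := Equiv.swap 0 2 * Equiv.swap 1 2

/-- `T(σ) = {i : i < σ(i) and i < σ⁻¹(i)}`. -/
def Tset {n : ℕ} (σ : Equiv.Perm (Fin n)) : Finset (Fin n) :=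
  Finset.univ.filter (fun i : Fin n => (i : ℕ) < σ i ∧ (i : ℕ) < σ⁻¹ i)

lemma Tset_card_le {n : ℕ} (σ : Equiv.Perm (Fin n)) : (Tset σ).card ≤ n :=
  (Finset.card_le_univ _).trans (by simp)

/-- The equivalence `Fin m ⊕ Fin n ≃ Fin (m+n)` sending the `Fin m` block to the
positions `k, k+1, …, k+m-1` (in order) and the `Fin n` part to the remaining
positions (in order): `inr i ↦ i` if `i < k` and `inr i ↦ m + i` otherwise. -/
noncomputable def blockEquiv (m n k : ℕ) (hk : k ≤ n) : Fin m ⊕ Fin n ≃ Fin (m + n) :=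
  Equiv.ofBijective
    (Sum.elim
      (fun j : Fin m => (⟨k + (j : ℕ), by have := j.isLt; omega⟩ : Fin (m + n)))
      (fun i : Fin n => if (i : ℕ) < k then (⟨(i : ℕ), by have := i.isLt; omega⟩ : Fin (m + n))
          else ⟨m + (i : ℕ), by have := i.isLt; omega⟩))
    (by
      rw [Fintype.bijective_iff_injective_and_card]
      refine ⟨?_, by simp⟩
      rintro (j | i) (j' | i') h
      · simp only [Sum.elim_inl, Fin.mk.injEq] at h
        exact congrArg Sum.inl (Fin.ext (by omega))
      · exfalso
        have hj := j.isLt; have hi := i'.isLt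
        simp only [Sum.elim_inl, Sum.elim_inr] at h
        split_ifs at h <;> simp only [Fin.mk.injEq] at h <;> omega
      · exfalso
        have hi := i.isLt; have hj := j'.isLt
        simp only [Sum.elim_inl, Sum.elim_inr] at h
        split_ifs at h <;> simp only [Fin.mk.injEq] at h <;> omega
      · have hi := i.isLt; have hi' := i'.isLt
        simp only [Sum.elim_inr] at h
        split_ifs at h <;> simp only [Fin.mk.injEq] at h <;>
          exact congrArg Sum.inr (Fin.ext (by omega)))

/-- The direct product `α ⊗ β` of permutations `α` of length `m` and `β` of length `n`:
with `k = |T(β)|` (the 0-indexed form of `k = 1 + |T(β)|`), the block of positions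
`k, …, k+m-1` carries the values of `α` shifted by `k`, and the remaining positions
carry the values of `β` in order, with values `≥ k` shifted up by `m`. -/
noncomputable def dprod {m n : ℕ} (α : Equiv.Perm (Fin m)) (β : Equiv.Perm (Fin n)) :
    Equiv.Perm (Fin (m + n)) :=
  (blockEquiv m n (Tset β).card (Tset_card_le β)).permCongr (Equiv.sumCongr α β)

/-- A permutation avoiding 132 has no occurrence of the pattern 132 at explicit positions. -/
lemma Avoids.not_lt_of_lt {n : ℕ} {σ : Equiv.Perm (Fin n)} (h : Avoids σ p132)
    {a b c : Fin n} (hab : a < b) (hbc : b < c) (hac : σ a < σ c) : ¬ σ c < σ b := by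
  intro hcb
  have hab' := hac.trans hcb
  refine h ⟨![a, b, c], ?_, ?_⟩
  · rw [Fin.strictMono_iff_lt_succ]
    intro i
    fin_cases i
    · simpa using hab
    · simpa using hbc
  · intro x y
    fin_cases x <;> fin_cases y <;>
      simp [p132, Equiv.swap_apply_def, hac, hcb, hab', hac.le, hcb.le, hab'.le]

lemma mem_Tset {n : ℕ} {σ : Equiv.Perm (Fin n)} {i : Fin n} :
    i ∈ Tset σ ↔ i < σ i ∧ i < σ⁻¹ i := by
  simp [Tset]

/-- For a 132-avoiding permutation, `T(σ)` is closed under going down. -/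
lemma Tset_isLowerSet {n : ℕ} {σ : Equiv.Perm (Fin n)} (h : Avoids σ p132) {i j : Fin n}
    (hi : i ∈ Tset σ) (hji : j < i) : j ∈ Tset σ := by
  rw [mem_Tset] at hi ⊢
  constructor <;> by_contra! hj
  · refine h.not_lt_of_lt hji hi.2 ?_ ?_
    · simpa using hj.trans_lt hji
    · simpa using hi.1
  · refine h.not_lt_of_lt (hj.trans_lt hji) hi.2 ?_ ?_
    · simpa using hji
    · simpa using hi.1

/-- For a 132-avoiding permutation, `T(σ)` is the initial segment of length `|T(σ)|`. -/
lemma mem_Tset_iff_lt_card {n : ℕ} {σ : Equiv.Perm (Fin n)} (h : Avoids σ p132) (i : Fin n) :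
    i ∈ Tset σ ↔ (i : ℕ) < (Tset σ).card := by
  constructor
  · intro hi
    have hsub : Finset.Iic i ⊆ Tset σ := fun j hj => by
      rcases (Finset.mem_Iic.1 hj).eq_or_lt with rfl | hlt
      · exact hi
      · exact Tset_isLowerSet h hi hlt
    have := Finset.card_le_card hsub
    rw [Fin.card_Iic] at this
    omega
  · intro hlt
    by_contra hi
    have hsub : Tset σ ⊆ Finset.Iio i := fun j hj => by
      rw [Finset.mem_Iio]
      by_contra! hij
      rcases hij.eq_or_lt with rfl | hij
      · exact hi hj
      · exact hi (Tset_isLowerSet h hj hij)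
    have := Finset.card_le_card hsub
    rw [Fin.card_Iio] at this
    omega

/-- A 132-avoiding permutation sends the initial segment `T(σ)` outside of itself. -/
lemma card_Tset_le_apply {n : ℕ} {σ : Equiv.Perm (Fin n)} (h : Avoids σ p132) {i : Fin n}
    (hi : (i : ℕ) < (Tset σ).card) : (Tset σ).card ≤ σ i := by
  by_contra! hlt
  rw [← mem_Tset_iff_lt_card h, mem_Tset] at hi hlt
  exact lt_asymm hi.1 (by simpa using hlt.2)

lemma blockEquiv_inl_val {m n k : ℕ} (hk : k ≤ n) (j : Fin m) :
    (blockEquiv m n k hk (Sum.inl j) : ℕ) = k + j := rfl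

lemma blockEquiv_inr_val {m n k : ℕ} (hk : k ≤ n) (i : Fin n) :
    (blockEquiv m n k hk (Sum.inr i) : ℕ) = if (i : ℕ) < k then (i : ℕ) else m + i := by
  simp only [blockEquiv, Equiv.ofBijective_apply, Sum.elim_inr]
  split_ifs <;> rfl

/-- The pair of arcs `(i, a)` and `(j, b)` is a crossing. -/
def IsCrossing (i a j b : ℕ) : Prop :=
  (i < j ∧ j < a ∧ a < b) ∨ (a < b ∧ b ≤ i ∧ i < j)

instance (i a j b : ℕ) : Decidable (IsCrossing i a j b) :=
  inferInstanceAs (Decidable (_ ∨ _))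

lemma crs_eq_sum {n : ℕ} (σ : Equiv.Perm (Fin n)) :
    crs σ = ∑ i : Fin n, ∑ j : Fin n, if IsCrossing i (σ i) j (σ j) then 1 else 0 := by
  rw [crs, Finset.card_filter, Fintype.sum_prod_type]
  rfl

/-- The number of crossings is additive with respect to the direct product `⊗`
on 132-avoiding permutations. -/
theorem crs_dprod {m n : ℕ} (α : Equiv.Perm (Fin m)) (β : Equiv.Perm (Fin n))
    (hα : Avoids α p132) (hβ : Avoids β p132) :
    crs (dprod α β) = crs α + crs β := by
  have hk := Tset_card_le β
  have happ (x : Fin m ⊕ Fin n) : dprod α β (blockEquiv m n _ hk x) =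
      blockEquiv m n _ hk (Equiv.sumCongr α β x) := by
    simp [dprod, Equiv.permCongr_apply]
  have hmixed (j : Fin m) (i : Fin n) :
      ¬ IsCrossing (blockEquiv m n _ hk (Sum.inl j)) (blockEquiv m n _ hk (Sum.inl (α j)))
        (blockEquiv m n _ hk (Sum.inr i)) (blockEquiv m n _ hk (Sum.inr (β i))) ∧
      ¬ IsCrossing (blockEquiv m n _ hk (Sum.inr i)) (blockEquiv m n _ hk (Sum.inr (β i)))
        (blockEquiv m n _ hk (Sum.inl j)) (blockEquiv m n _ hk (Sum.inl (α j))) := by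
    have hi := @card_Tset_le_apply _ _ hβ i
    have hj := j.isLt
    have hαj := (α j).isLt
    simp only [blockEquiv_inl_val, blockEquiv_inr_val, IsCrossing]
    split_ifs <;> omega
  have hleft (i j : Fin m) :
      IsCrossing (blockEquiv m n _ hk (Sum.inl i)) (blockEquiv m n _ hk (Sum.inl (α i)))
        (blockEquiv m n _ hk (Sum.inl j)) (blockEquiv m n _ hk (Sum.inl (α j))) ↔
      IsCrossing i (α i) j (α j) := by
    simp only [blockEquiv_inl_val, IsCrossing]
    omega
  have hright (i j : Fin n) :
      IsCrossing (blockEquiv m n _ hk (Sum.inr i)) (blockEquiv m n _ hk (Sum.inr (β i)))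
        (blockEquiv m n _ hk (Sum.inr j)) (blockEquiv m n _ hk (Sum.inr (β j))) ↔
      IsCrossing i (β i) j (β j) := by
    simp only [blockEquiv_inr_val, IsCrossing]
    split_ifs <;> omega
  simp only [crs_eq_sum]
  rw [← (blockEquiv m n _ hk).sum_comp]
  simp_rw [← (blockEquiv m n _ hk).sum_comp (fun y => ite (IsCrossing _ _ y _) 1 0), happ,
    Fintype.sum_sum_type]
  simp [hleft, hright, hmixed]
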